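/- Let a, b, x be real numbers and let γ : [0,1] → ℝ be a continuous function with γ(0) = a and γ(1) = b. Define γ⁻(t) = min(γ(t), x) and γ⁺(t) = max(γ(t), x). Then: (i) γ⁻ is continuous, γ⁻(0) = min(a, x), γ⁻(1) = min(b, x), and γ⁻(t) ≤ x for all t ∈ [0,1]; (ii) γ⁺ is continuous, γ⁺(0) = max(a, x), γ⁺(1) = max(b, x), and γ⁺(t) ≥ x for all t ∈ [0,1]; (iii) γ⁻(t) + γ⁺(t) = γ(t) + x for all t ∈ [0,1]; and (iv) the total variation of γ on [0,1] equals the total variation of γ⁻ on [0,1] plus the total variation of γ⁺ on [0,1]. -/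

import Mathlib

/-!
Clamping to either side of `x` is monotone and `min p x + max p x = p + x`, so between any two
points the increments of `min γ x` and `max γ x` have the same sign and add up to the increment
of `γ`: distances add exactly. On a finite set the variation is the sum of the consecutive
distances, so there it adds as well. On a general set the variation is the supremum over finite
subsets, and since these are directed under inclusion, the suprema for the two summands can be
taken along the same finite sets.
-/

open Set

section Variation

variable {α E F G : Type*} [LinearOrder α]
  [PseudoEMetricSpace E] [PseudoEMetricSpace F] [PseudoEMetricSpace G]

theorem eVariationOn_eq_iSup_finset (f : α → E) (s : Set α) :
    eVariationOn f s = ⨆ T : {T : Finset α // ↑T ⊆ s}, eVariationOn f (T : Finset α) := by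
  refine le_antisymm (iSup_le fun ⟨n, u, hu, hus⟩ => ?_)
    (iSup_le fun T => eVariationOn.mono f T.2)
  have hT : ((Finset.Iic n).image u : Set α) = u '' Iic n := by simp
  refine le_iSup_of_le ⟨(Finset.Iic n).image u, hT ▸ image_subset_iff.2 fun i _ => hus i⟩ ?_
  simp only [hT, eVariationOn.image_range_of_monotone f hu n, edist_comm, le_refl]

theorem eVariationOn_insert_of_isGreatest (f : α → E) {s : Set α} {m c : α}
    (hm : IsGreatest s m) (hmc : m ≤ c) :
    eVariationOn f (insert c s) = eVariationOn f s + edist (f m) (f c) := by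
  rw [← union_singleton, eVariationOn.union' f hm isLeast_singleton hmc,
    eVariationOn.subsingleton f subsingleton_singleton, add_zero]

theorem eVariationOn_finset_eq_add_of_edist_eq_add {f : α → E} {g : α → F} {h : α → G}
    {T : Finset α}
    (hadd : ∀ x ∈ T, ∀ y ∈ T, edist (h x) (h y) = edist (f x) (f y) + edist (g x) (g y)) :
    eVariationOn h T = eVariationOn f T + eVariationOn g T := by
  induction T using Finset.induction_on_max with
  | empty => simp
  | insert c T hc ih =>
    rcases T.eq_empty_or_nonempty with rfl | hT
    · simp
    · have hmax : IsGreatest (T : Set α) (T.max' hT) := T.isGreatest_max' hT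
      have hle : T.max' hT ≤ c := (hc _ (T.max'_mem hT)).le
      have ihT : eVariationOn h T = eVariationOn f T + eVariationOn g T :=
        ih fun x hx y hy => hadd x (Finset.mem_insert_of_mem hx) y (Finset.mem_insert_of_mem hy)
      have hedist : edist (h (T.max' hT)) (h c) =
          edist (f (T.max' hT)) (f c) + edist (g (T.max' hT)) (g c) :=
        hadd _ (Finset.mem_insert_of_mem (T.max'_mem hT)) c (Finset.mem_insert_self c T)
      simp only [Finset.coe_insert, eVariationOn_insert_of_isGreatest _ hmax hle]
      rw [ihT, hedist, add_add_add_comm]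

theorem eVariationOn_eq_add_of_edist_eq_add {f : α → E} {g : α → F} {h : α → G} {s : Set α}
    (hadd : ∀ x ∈ s, ∀ y ∈ s, edist (h x) (h y) = edist (f x) (f y) + edist (g x) (g y)) :
    eVariationOn h s = eVariationOn f s + eVariationOn g s := by
  rw [eVariationOn_eq_iSup_finset h, eVariationOn_eq_iSup_finset f, eVariationOn_eq_iSup_finset g,
    ENNReal.iSup_add_iSup]
  · exact iSup_congr fun T => eVariationOn_finset_eq_add_of_edist_eq_add
      fun x hx y hy => hadd x (T.2 hx) y (T.2 hy)
  · intro T U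
    have hTU : ((T.1 ∪ U.1 : Finset α) : Set α) ⊆ s := by
      simpa only [Finset.coe_union] using union_subset T.2 U.2
    exact ⟨⟨T.1 ∪ U.1, hTU⟩, add_le_add
      (eVariationOn.mono f (Finset.coe_subset.2 Finset.subset_union_left))
      (eVariationOn.mono g (Finset.coe_subset.2 Finset.subset_union_right))⟩

end Variation

theorem edist_eq_edist_min_add_edist_max (p q x : ℝ) :
    edist p q = edist (min p x) (min q x) + edist (max p x) (max q x) := by
  simp only [edist_dist, Real.dist_eq]
  rw [← ENNReal.ofReal_add (abs_nonneg _) (abs_nonneg _), add_comm, abs_sub_sup_add_abs_sub_inf]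

theorem eVariationOn_eq_eVariationOn_min_add_eVariationOn_max {α : Type*} [LinearOrder α]
    (f : α → ℝ) (s : Set α) (x : ℝ) :
    eVariationOn f s =
      eVariationOn (fun t => min (f t) x) s + eVariationOn (fun t => max (f t) x) s :=
  eVariationOn_eq_add_of_edist_eq_add fun u _ v _ => edist_eq_edist_min_add_edist_max (f u) (f v) x

theorem jeep_split_lemma_path_general {α : Type*} [LinearOrder α] [TopologicalSpace α]
    {s : Set α} {p q : α} (a b x : ℝ) (γ : α → ℝ)
    (hγ : ContinuousOn γ s) (hp : γ p = a) (hq : γ q = b) :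
    (ContinuousOn (fun t => min (γ t) x) s ∧
      min (γ p) x = min a x ∧ min (γ q) x = min b x ∧
      ∀ t ∈ s, min (γ t) x ≤ x) ∧
    (ContinuousOn (fun t => max (γ t) x) s ∧
      max (γ p) x = max a x ∧ max (γ q) x = max b x ∧
      ∀ t ∈ s, x ≤ max (γ t) x) ∧
    (∀ t ∈ s, min (γ t) x + max (γ t) x = γ t + x) ∧
    eVariationOn γ s =
      eVariationOn (fun t => min (γ t) x) s + eVariationOn (fun t => max (γ t) x) s :=
  ⟨⟨hγ.inf continuousOn_const, by rw [hp], by rw [hq], fun _ _ => min_le_right _ _⟩,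
    ⟨hγ.sup continuousOn_const, by rw [hp], by rw [hq], fun _ _ => le_max_right _ _⟩,
    fun _ _ => min_add_max _ _,
    eVariationOn_eq_eVariationOn_min_add_eVariationOn_max γ s x⟩

/-- Split Lemma (path form): a continuous path `γ` on `[0,1]` from `a` to `b`
splits at level `x` into the truncated paths `min (γ t) x` and `max (γ t) x`,
which are continuous, have the truncated endpoints, stay on their respective
sides of `x`, sum to `γ t + x`, and whose total variations add up to the total
variation of `γ`. -/
theorem jeep_split_lemma_path (a b x : ℝ) (γ : ℝ → ℝ)
    (hγ : ContinuousOn γ (Icc (0 : ℝ) 1)) (h0 : γ 0 = a) (h1 : γ 1 = b) :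
    (ContinuousOn (fun t => min (γ t) x) (Icc (0 : ℝ) 1) ∧
      min (γ 0) x = min a x ∧ min (γ 1) x = min b x ∧
      ∀ t ∈ Icc (0 : ℝ) 1, min (γ t) x ≤ x) ∧
    (ContinuousOn (fun t => max (γ t) x) (Icc (0 : ℝ) 1) ∧
      max (γ 0) x = max a x ∧ max (γ 1) x = max b x ∧
      ∀ t ∈ Icc (0 : ℝ) 1, x ≤ max (γ t) x) ∧
    (∀ t ∈ Icc (0 : ℝ) 1, min (γ t) x + max (γ t) x = γ t + x) ∧
    eVariationOn γ (Icc (0 : ℝ) 1) =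
      eVariationOn (fun t => min (γ t) x) (Icc (0 : ℝ) 1) +
        eVariationOn (fun t => max (γ t) x) (Icc (0 : ℝ) 1) :=
  jeep_split_lemma_path_general a b x γ hγ h0 h1
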